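/- For v ∈ R = ℂ[G], there exists w ∈ R satisfying (T − 1)·v = (S − 1)·w if and only if there exists r ∈ R with v = (y² + y + 1)·r, where y = S·T. That is, {v ∈ R : (T−1)·v ∈ (S−1)·R} is exactly the right ideal (y² + y + 1)·R. -/

import Mathlib

open scoped MatrixGroups

/-- `PSL₂(ℤ)`: the quotient of `SL₂(ℤ)` by its center `{±I}`. -/
abbrev PSL2Z : Type :=
  Matrix.SpecialLinearGroup (Fin 2) ℤ ⧸ Subgroup.center (Matrix.SpecialLinearGroup (Fin 2) ℤ)

/-- The image of `T = [[1,1],[0,1]]` in `PSL₂(ℤ)`. -/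
def Tg : PSL2Z := QuotientGroup.mk ModularGroup.T

/-- The image of `S = [[0,-1],[1,0]]` in `PSL₂(ℤ)`. -/
def Sg : PSL2Z := QuotientGroup.mk ModularGroup.S

/-- The element `x = S` of `PSL₂(ℤ)`. -/
def xg : PSL2Z := Sg

/-- The element `y = S·T` of `PSL₂(ℤ)`. -/
def yg : PSL2Z := Sg * Tg

/-- The embedding of the group `PSL₂(ℤ)` into its complex group algebra. -/
noncomputable def ofG : PSL2Z → MonoidAlgebra ℂ PSL2Z := MonoidAlgebra.of ℂ PSL2Z

/-!
An element `u` of the group algebra killed by both `1 + x` and `1 + y + y²` vanishes: where a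
suitable energy is largest on the support of `u`, one of the two relations produces a point of the
support with larger energy. If `(T - 1) v = (S - 1) w`, then, as `T = x y`, this applies to
`u = (y - 1) v`, so `y v = v`. Averaging over the powers of `y` puts `v` in `(y² + y + 1) R`.
-/

open Finset ModularGroup
open Matrix hiding of
open MonoidAlgebra (of)

/-- A height function certifying a ping-pong between `s`, thought of as an involution, and `y`,
thought of as having order three: from a point where `s` does not raise `E`, moving first to either
of the two other points of its `y`-orbit and then by `s` raises `E`. -/
def IsPingPongHeight {α β : Type*} [Preorder β] (s y : α → α) (E : α → β) : Prop :=
  ∀ a, E (s a) ≤ E a → E a < E (s (y a)) ∧ E a < E (s (y (y a)))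

theorem IsPingPongHeight.eq_zero_of_add_eq_zero {α β M : Type*} [LinearOrder β] [AddZeroClass M]
    {s y : α → α} {E : α → β} (hE : IsPingPongHeight s y E) {f : α → M}
    (hf : f.support.Finite) (hs : ∀ a, f a + f (s a) = 0)
    (hy : ∀ a, f a + f (y a) + f (y (y a)) = 0) : f = 0 := by
  by_contra hne
  obtain ⟨a, ha, hmax⟩ :=
    Set.exists_max_image f.support E hf (Function.support_nonempty_iff.2 hne)
  have support_s {b : α} (hb : f b ≠ 0) : f (s b) ≠ 0 := fun h0 ↦ hb (by simpa [h0] using hs b)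
  have eq_zero_of_lt {b : α} (hb : E a < E (s b)) : f b = 0 :=
    not_not.1 fun h ↦ (hmax _ (support_s h)).not_gt hb
  obtain ⟨h₁, h₂⟩ := hE a (hmax _ (support_s ha))
  exact ha (by simpa [eq_zero_of_lt h₁, eq_zero_of_lt h₂] using hy a)

theorem geom_sum_three {R : Type*} [Semiring R] (y : R) :
    ∑ i ∈ range 3, y ^ i = y ^ 2 + y + 1 := by
  simp [sum_range_succ, add_assoc, add_comm, add_left_comm]

theorem IsPingPongHeight.eq_zero_of_mul_eq_zero {k G β : Type*} [Semiring k] [Group G]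
    [LinearOrder β] {s y : G} {E : G → β} (hE : IsPingPongHeight (s * ·) (y * ·) E)
    {u : MonoidAlgebra k G} (hs : (1 + of k G s) * u = 0)
    (hy : (∑ i ∈ range 3, of k G y ^ i) * u = 0) : u = 0 := by
  have coeff_zero : ⇑u.coeff = 0 := by
    refine hE.eq_zero_of_add_eq_zero u.coeff.hasFiniteSupport (fun g ↦ ?_) (fun g ↦ ?_)
    · simpa [add_mul, add_comm] using congrArg (fun z ↦ z.coeff (s * g)) hs
    · rw [geom_sum_three] at hy
      simpa [add_mul, pow_two, mul_assoc] using
        congrArg (fun z ↦ z.coeff (y * (y * g))) hy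
  ext g
  exact congrFun coeff_zero g

section Ring

variable {R : Type*} [Ring R] {s y : R} {n : ℕ}

theorem mul_eq_self_iff_exists_geom_sum_mul (hy : y ^ n = 1) (hn : IsUnit (n : R)) (v : R) :
    y * v = v ↔ ∃ r, v = (∑ i ∈ range n, y ^ i) * r := by
  constructor
  · intro hv
    obtain ⟨c, hc⟩ := hn.exists_right_inv
    have pow_mul_eq (i : ℕ) : y ^ i * v = v := by
      induction i with
      | zero => simp
      | succ i ih => rw [pow_succ, mul_assoc, hv, ih]
    refine ⟨v * c, ?_⟩
    calc v = v * (n * c) := by rw [hc, mul_one]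
      _ = n * v * c := by rw [← mul_assoc, Nat.cast_comm]
      _ = (∑ i ∈ range n, y ^ i) * (v * c) := by
        simp [← mul_assoc, sum_mul, pow_mul_eq]
  · rintro ⟨r, rfl⟩
    rw [← sub_eq_zero, ← sub_one_mul, ← mul_assoc, mul_geom_sum, hy, sub_self, zero_mul]

theorem exists_mul_sub_one_mul_eq_iff_mul_eq_self (hs : s * s = 1) (hy : y ^ n = 1)
    (h : ∀ u : R, (1 + s) * u = 0 → (∑ i ∈ range n, y ^ i) * u = 0 → u = 0) (v : R) :
    (∃ w, (s * y - 1) * v = (s - 1) * w) ↔ y * v = v := by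
  constructor
  · rintro ⟨w, hw⟩
    have one_add_mul_sub_one : (1 + s) * (s - 1) = 0 := by
      rw [mul_sub_one, add_mul, hs, one_mul, add_comm, sub_self]
    have hsu : (1 + s) * ((y - 1) * v) = 0 :=
      calc (1 + s) * ((y - 1) * v)
          = (1 + s) * ((s * y - 1) * v) - (1 + s) * (s - 1) * (y * v) := by noncomm_ring
        _ = (1 + s) * (s - 1) * (w - y * v) := by rw [hw]; noncomm_ring
        _ = 0 := by rw [one_add_mul_sub_one, zero_mul]
    have hyu : (∑ i ∈ range n, y ^ i) * ((y - 1) * v) = 0 := by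
      rw [← mul_assoc, geom_sum_mul, hy, sub_self, zero_mul]
    rw [← sub_eq_zero, ← sub_one_mul, h _ hsu hyu]
  · intro hv
    exact ⟨v, by rw [sub_mul, sub_mul, mul_assoc, hv]⟩

end Ring

section PairEnergy

variable {ι R : Type*} [Fintype ι] [CommRing R]

/-- The sum of the squared lengths of `a`, `b` and `a + b`, to be applied to the rows of a `2 × 2`
matrix. On pairs of rows `y` acts by `(a, b) ↦ (-b, a + b)`, which permutes these three vectors up
to sign, whereas `S` acts by `(a, b) ↦ (-b, a)`, which replaces `a + b` by `a - b`. -/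
def pairEnergy (a b : ι → R) : R :=
  a ⬝ᵥ a + b ⬝ᵥ b + (a + b) ⬝ᵥ (a + b)

theorem pairEnergy_smul (r : R) (a b : ι → R) :
    pairEnergy (r • a) (r • b) = r ^ 2 * pairEnergy a b := by
  simp only [pairEnergy, ← smul_add, smul_dotProduct, dotProduct_smul, smul_eq_mul]
  ring

theorem pairEnergy_neg_left_swap (a b : ι → R) :
    pairEnergy (-b) a = pairEnergy a b - 4 * (a ⬝ᵥ b) := by
  simp only [pairEnergy, dotProduct_add, add_dotProduct, dotProduct_neg, neg_dotProduct,
    dotProduct_comm b a]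
  ring

theorem pairEnergy_neg_left_add (a b : ι → R) : pairEnergy (-b) (a + b) = pairEnergy a b := by
  have add_eq : -b + (a + b) = a := by abel
  simp only [pairEnergy, neg_dotProduct_neg, add_eq]
  ring

variable [LinearOrder R] [IsStrictOrderedRing R] {a b : ι → R}

theorem dotProduct_self_pos (ha : a ≠ 0) : 0 < a ⬝ᵥ a :=
  (sum_nonneg fun i _ ↦ mul_self_nonneg (a i)).lt_of_ne' (dotProduct_self_eq_zero.not.2 ha)

theorem pairEnergy_neg_left_swap_le_iff :
    pairEnergy (-b) a ≤ pairEnergy a b ↔ 0 ≤ a ⬝ᵥ b := by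
  rw [pairEnergy_neg_left_swap, sub_le_self_iff, mul_nonneg_iff_of_pos_left four_pos]

theorem pairEnergy_lt_of_right_ne_zero (hb : b ≠ 0) (h : pairEnergy (-b) a ≤ pairEnergy a b) :
    pairEnergy a b < pairEnergy (-(a + b)) (-b) := by
  have hab := pairEnergy_neg_left_swap_le_iff.1 h
  rw [pairEnergy_neg_left_swap, pairEnergy_neg_left_add, neg_dotProduct, dotProduct_add,
    dotProduct_comm b a]
  linarith [dotProduct_self_pos hb]

theorem pairEnergy_lt_of_left_ne_zero (ha : a ≠ 0) (h : pairEnergy (-b) a ≤ pairEnergy a b) :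
    pairEnergy a b < pairEnergy (-a) (-(a + b)) := by
  have hab := pairEnergy_neg_left_swap_le_iff.1 h
  have add_eq : -b + (a + b) = a := by abel
  have energy_eq : pairEnergy (-(a + b)) a = pairEnergy a b := by
    rw [← pairEnergy_neg_left_add a b, ← pairEnergy_neg_left_add (-b), add_eq]
  rw [pairEnergy_neg_left_swap, energy_eq, neg_dotProduct, add_dotProduct,
    dotProduct_comm b a]
  linarith [dotProduct_self_pos ha]

end PairEnergy

section ModularGroup

variable (A : SL(2, ℤ))

theorem S_mul_apply_zero : (S * A) 0 = -A 1 := by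
  ext j
  simp [coe_S, Matrix.mul_apply]

theorem S_mul_apply_one : (S * A) 1 = A 0 := by
  ext j
  simp [coe_S, Matrix.mul_apply]

theorem T_mul_apply_zero : (T * A) 0 = A 0 + A 1 := by
  ext j
  simp [coe_T, Matrix.mul_apply]

theorem pairEnergy_rows_mul_of_mem_center {C : SL(2, ℤ)} (hC : C ∈ Subgroup.center SL(2, ℤ)) :
    pairEnergy ((A * C) 0) ((A * C) 1) = pairEnergy (A 0) (A 1) := by
  obtain ⟨r, hr, hrC⟩ := Matrix.SpecialLinearGroup.mem_center_iff.1 hC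
  have row_eq (i : Fin 2) : (A * C) i = r • A i := by
    ext j
    simp only [Matrix.SpecialLinearGroup.coe_mul, ← hrC, scalar_apply, mul_diagonal,
      Pi.smul_apply, smul_eq_mul, mul_comm]
  rw [Fintype.card_fin] at hr
  rw [row_eq, row_eq, pairEnergy_smul, hr, one_mul]

/-- The function on `PSL₂(ℤ)` induced by `pairEnergy` of the two rows of a matrix. -/
def rowEnergy (g : PSL2Z) : ℤ :=
  Quotient.liftOn' g (fun A ↦ pairEnergy (A 0) (A 1)) fun A B h ↦ by
    simpa using (pairEnergy_rows_mul_of_mem_center A (QuotientGroup.leftRel_apply.1 h)).symm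

theorem rowEnergy_mk : rowEnergy (QuotientGroup.mk A) = pairEnergy (A 0) (A 1) := rfl

theorem isPingPongHeight_rowEnergy : IsPingPongHeight (Sg * ·) (yg * ·) rowEnergy := by
  intro g h
  obtain ⟨A, rfl⟩ := QuotientGroup.mk_surjective g
  have neg_add_eq : -A 1 + (A 0 + A 1) = A 0 := by abel
  simp only [yg, Sg, Tg, ← QuotientGroup.mk_mul, rowEnergy_mk, mul_assoc, S_mul_apply_zero,
    S_mul_apply_one, T_mul_apply_zero, T_mul_apply_one, neg_add_eq] at h ⊢
  exact ⟨pairEnergy_lt_of_right_ne_zero (A.row_ne_zero 1) h,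
    pairEnergy_lt_of_left_ne_zero (A.row_ne_zero 0) h⟩

theorem mk_neg_one : (QuotientGroup.mk (-1) : PSL2Z) = 1 := by
  simp [QuotientGroup.eq_one_iff, Subgroup.mem_center_iff]

theorem Sg_mul_self : Sg * Sg = 1 := by
  have S_mul_self : S * S = -1 := by decide
  rw [Sg, ← QuotientGroup.mk_mul, S_mul_self, mk_neg_one]

theorem yg_pow_three : yg ^ 3 = 1 := by
  have S_mul_T_pow_three : (S * T) ^ 3 = -1 := by decide
  rw [yg, Sg, Tg, ← QuotientGroup.mk_mul, ← QuotientGroup.mk_pow, S_mul_T_pow_three, mk_neg_one]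

theorem Tg_eq_Sg_mul_yg : Tg = Sg * yg := by
  rw [yg, ← mul_assoc, Sg_mul_self, one_mul]

end ModularGroup

theorem T_sub_one_eq_S_sub_one_iff_general {k : Type*} [Ring k] (h3 : IsUnit (3 : k))
    (v : MonoidAlgebra k PSL2Z) :
    (∃ w, (of k PSL2Z Tg - 1) * v = (of k PSL2Z Sg - 1) * w) ↔
    (∃ r, v = (of k PSL2Z yg ^ 2 + of k PSL2Z yg + 1) * r) := by
  have hs : of k PSL2Z Sg * of k PSL2Z Sg = 1 := by
    rw [← map_mul, Sg_mul_self, map_one]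
  have hy : of k PSL2Z yg ^ 3 = 1 := by rw [← map_pow, yg_pow_three, map_one]
  have isUnit_three : IsUnit ((3 : ℕ) : MonoidAlgebra k PSL2Z) := by
    simpa only [map_ofNat, Nat.cast_ofNat] using
      h3.map (MonoidAlgebra.singleOneRingHom : k →+* MonoidAlgebra k PSL2Z)
  rw [Tg_eq_Sg_mul_yg, map_mul, exists_mul_sub_one_mul_eq_iff_mul_eq_self hs hy
    (fun _ ↦ isPingPongHeight_rowEnergy.eq_zero_of_mul_eq_zero),
    mul_eq_self_iff_exists_geom_sum_mul hy isUnit_three, geom_sum_three]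

/-- In `R = ℂ[PSL₂(ℤ)]` with `y = ST`: there exists `w` with `(T-1)v = (S-1)w`
iff `v` lies in the right ideal `(y² + y + 1)·R`. -/
theorem T_sub_one_eq_S_sub_one_iff (v : MonoidAlgebra ℂ PSL2Z) :
    (∃ w : MonoidAlgebra ℂ PSL2Z, (ofG Tg - 1) * v = (ofG Sg - 1) * w) ↔
    (∃ r : MonoidAlgebra ℂ PSL2Z, v = (ofG yg ^ 2 + ofG yg + 1) * r) :=
  T_sub_one_eq_S_sub_one_iff_general (by norm_num) v
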